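/- arXiv:2505.17393 — 6 statements merged into one kernel-verified Lean document; each statement's English description precedes it below -/
import Mathlib

section
/- The Gaussian spectral mixture kernel k_g (viewed as a complex-valued function of the difference τ) is positive definite on ℝ^d: for every n ∈ ℕ, all points x_1,…,x_n ∈ ℝ^d and all coefficients c_1,…,c_n ∈ ℂ, the sum Σ_{i,j=1}^n c_i conj(c_j) k_g(x_i − x_j) is a nonnegative real number. -/
open Matrix
open scoped RealInnerProductSpace ComplexOrder BigOperators

/-- The Gaussian spectral mixture kernel
`k_g(τ) = ∑_q w_q exp(-2π² τᵀ Σ_q τ) cos(2π τᵀ μ_q)`. -/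
noncomputable def gsmKernel {d Q : ℕ} (w : Fin Q → ℝ)
    (μ : Fin Q → EuclideanSpace ℝ (Fin d)) (M : Fin Q → Matrix (Fin d) (Fin d) ℝ)
    (τ : EuclideanSpace ℝ (Fin d)) : ℝ :=
  ∑ q, w q * Real.exp (-2 * Real.pi ^ 2 *
      dotProduct (fun i => τ i) ((M q).mulVec fun i => τ i)) *
    Real.cos (2 * Real.pi * ⟪τ, μ q⟫)

open MeasureTheory ProbabilityTheory in
lemma charFun_pd {E : Type*} [NormedAddCommGroup E] [InnerProductSpace ℝ E] [MeasurableSpace E]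
    [BorelSpace E] [SecondCountableTopology E] (P : Measure E) [IsFiniteMeasure P] (n : ℕ)
    (x : Fin n → E) (c : Fin n → ℂ) :
    0 ≤ ∑ i, ∑ j, c i * (starRingEnd ℂ) (c j) * charFun P (x i - x j) := by
  have key : ∀ i j, Integrable (fun ω : E => c i * (starRingEnd ℂ) (c j) *
      Complex.exp (⟪ω, x i - x j⟫ * Complex.I)) P := by
    intro i j
    apply Integrable.const_mul
    refine Integrable.of_bound (C := 1) (Continuous.aestronglyMeasurable (by fun_prop)) ?_
    refine Filter.Eventually.of_forall fun ω => ?_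
    rw [Complex.norm_exp_ofReal_mul_I]
  have h : ∑ i, ∑ j, c i * (starRingEnd ℂ) (c j) * charFun P (x i - x j)
      = ∫ ω, ((Complex.normSq (∑ i, c i * Complex.exp (⟪ω, x i⟫ * Complex.I)) : ℝ) : ℂ) ∂P := by
    simp_rw [charFun_apply, ← integral_const_mul]
    simp_rw [← integral_finsetSum Finset.univ (fun j _ => key _ j)]
    rw [← integral_finsetSum Finset.univ
      (fun i _ => integrable_finsetSum Finset.univ (fun j _ => key i j))]
    congr 1
    ext ω
    rw [Complex.normSq_eq_conj_mul_self, mul_comm, map_sum, Finset.sum_mul_sum]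
    refine Finset.sum_congr rfl fun i _ => Finset.sum_congr rfl fun j _ => ?_
    rw [map_mul, ← Complex.exp_conj, map_mul, Complex.conj_I, Complex.conj_ofReal,
      inner_sub_right, Complex.ofReal_sub, sub_mul, sub_eq_add_neg, Complex.exp_add]
    ring_nf
  rw [h, integral_complex_ofReal]
  exact Complex.zero_le_real.2 (integral_nonneg fun ω => Complex.normSq_nonneg _)

open MeasureTheory ProbabilityTheory in
lemma gsm_term {d : ℕ} (m τ : EuclideanSpace ℝ (Fin d)) (S : Matrix (Fin d) (Fin d) ℝ)
    (hS : S.PosSemidef) :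
    ((Real.exp (-2 * Real.pi ^ 2 * dotProduct (fun i => τ i) (S.mulVec fun i => τ i)) *
      Real.cos (2 * Real.pi * ⟪τ, m⟫) : ℝ) : ℂ) =
    (1 / 2) * (charFun (multivariateGaussian m S) ((2 * Real.pi) • τ) +
      charFun (multivariateGaussian (-m) S) ((2 * Real.pi) • τ)) := by
  have e : (fun i => τ i) = τ.ofLp := rfl
  rw [charFun_multivariateGaussian hS, charFun_multivariateGaussian hS, e]
  push_cast
  rw [Complex.cos]
  simp only [inner_smul_left, inner_neg_right, WithLp.ofLp_smul, Matrix.mulVec_smul,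
    dotProduct_smul, smul_dotProduct, smul_eq_mul]
  rw [mul_div_assoc', mul_add, ← Complex.exp_add, ← Complex.exp_add, div_eq_inv_mul, one_div]
  congr 2 <;> congr 1 <;> simp <;> ring

theorem gsmKernel_posDef {d Q : ℕ} (w : Fin Q → ℝ) (hw : ∀ q, 0 ≤ w q)
    (μ : Fin Q → EuclideanSpace ℝ (Fin d)) (M : Fin Q → Matrix (Fin d) (Fin d) ℝ)
    (hsymm : ∀ q, (M q).IsSymm) (hpd : ∀ q, (M q).PosDef)
    (n : ℕ) (x : Fin n → EuclideanSpace ℝ (Fin d)) (c : Fin n → ℂ) :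
    0 ≤ ∑ i, ∑ j, c i * (starRingEnd ℂ) (c j) * (gsmKernel w μ M (x i - x j) : ℂ) := by
  have h : ∑ i, ∑ j, c i * (starRingEnd ℂ) (c j) * (gsmKernel w μ M (x i - x j) : ℂ)
      = ∑ q, ((w q / 2 : ℝ) : ℂ) *
        ((∑ i, ∑ j, c i * (starRingEnd ℂ) (c j) *
          MeasureTheory.charFun (ProbabilityTheory.multivariateGaussian (μ q) (M q))
            ((2 * Real.pi) • x i - (2 * Real.pi) • x j)) +
        (∑ i, ∑ j, c i * (starRingEnd ℂ) (c j) *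
          MeasureTheory.charFun (ProbabilityTheory.multivariateGaussian (-μ q) (M q))
            ((2 * Real.pi) • x i - (2 * Real.pi) • x j))) := by
    simp_rw [← Finset.sum_add_distrib, Finset.mul_sum]
    rw [Finset.sum_comm]
    rw [Finset.sum_comm (s := (Finset.univ : Finset (Fin Q)))]
    rw [Finset.sum_comm]
    refine Finset.sum_congr rfl fun i _ => ?_
    rw [Finset.sum_comm (s := (Finset.univ : Finset (Fin Q)))]
    refine Finset.sum_congr rfl fun j _ => ?_
    rw [gsmKernel, Complex.ofReal_sum, Finset.mul_sum]
    refine Finset.sum_congr rfl fun q _ => ?_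
    rw [mul_assoc (w q), Complex.ofReal_mul, gsm_term _ _ _ (hpd q).posSemidef, smul_sub]
    push_cast
    ring
  rw [h]
  refine Finset.sum_nonneg fun q _ => mul_nonneg ?_ (add_nonneg ?_ ?_)
  · exact Complex.zero_le_real.2 (by have := hw q; positivity)
  · exact charFun_pd _ n (fun i => (2 * Real.pi) • x i) c
  · exact charFun_pd _ n (fun i => (2 * Real.pi) • x i) c
end

section
/- The Cauchy spectral mixture kernel k_c (viewed as a complex-valued function of the difference τ) is positive definite on ℝ^d: for every n ∈ ℕ, all points x_1,…,x_n ∈ ℝ^d and all coefficients c_1,…,c_n ∈ ℂ, the sum Σ_{i,j=1}^n c_i conj(c_j) k_c(x_i − x_j) is a nonnegative real number. -/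
open scoped RealInnerProductSpace ComplexOrder BigOperators

/-- The Cauchy spectral mixture kernel
`k_c(τ) = ∑_q w_q exp(-2π ∑_i γ_{q,i} |τ_i|) cos(2π τᵀ η_q)`. -/
noncomputable def csmKernel {d Q : ℕ} (w : Fin Q → ℝ)
    (η : Fin Q → EuclideanSpace ℝ (Fin d)) (γ : Fin Q → Fin d → ℝ)
    (τ : EuclideanSpace ℝ (Fin d)) : ℝ :=
  ∑ q, w q * Real.exp (-2 * Real.pi * ∑ i, γ q i * |τ i|) *
    Real.cos (2 * Real.pi * ⟪τ, η q⟫)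

open Matrix in
lemma csm_min {n : ℕ} (u : Fin n → ℝ) (hu : ∀ i, 0 ≤ u i) :
    (Matrix.of fun i j => ((min (u i) (u j) : ℝ) : ℂ)).PosSemidef := by
  have e : (Matrix.of fun i j => ((min (u i) (u j) : ℝ) : ℂ)) =
      Matrix.gram ℂ (fun i => MeasureTheory.indicatorConstLp 2
        (μ := (MeasureTheory.volume : MeasureTheory.Measure ℝ))
        (measurableSet_Ioc (a := (0 : ℝ)) (b := u i)) (by simp) (1 : ℂ)) := by
    ext i j
    rw [Matrix.gram_apply, MeasureTheory.L2.inner_indicatorConstLp_one_indicatorConstLp_one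
        measurableSet_Ioc measurableSet_Ioc (by simp) (by simp),
      Set.Ioc_inter_Ioc]
    simp [hu]
  rw [e]
  exact Matrix.posSemidef_gram _ _

open Matrix in
lemma csm_rank_one {n : ℕ} (u : Fin n → ℝ) :
    (Matrix.of fun i j => ((u i * u j : ℝ) : ℂ)).PosSemidef := by
  have h := posSemidef_vecMulVec_self_star (R := ℂ) (fun i => (u i : ℂ))
  convert h using 1
  ext i j
  simp [vecMulVec_apply]

open Matrix in
lemma csm_mul {n : ℕ} {f g : Fin n → Fin n → ℝ}
    (hf : (Matrix.of fun i j => ((f i j : ℝ) : ℂ)).PosSemidef)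
    (hg : (Matrix.of fun i j => ((g i j : ℝ) : ℂ)).PosSemidef) :
    (Matrix.of fun i j => ((f i j * g i j : ℝ) : ℂ)).PosSemidef := by
  have e : (Matrix.of fun i j => ((f i j * g i j : ℝ) : ℂ)) =
      (Matrix.of fun i j => ((f i j : ℝ) : ℂ)) ⊙ (Matrix.of fun i j => ((g i j : ℝ) : ℂ)) := by
    ext i j
    simp
  rw [e]
  exact hf.hadamard hg

lemma csm_exp {n : ℕ} (a : ℝ) (ha : 0 ≤ a) (s : Fin n → ℝ) :
    (Matrix.of fun i j => ((Real.exp (-(a * |s i - s j|)) : ℝ) : ℂ)).PosSemidef := by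
  have h := csm_mul (csm_rank_one fun i => Real.exp (-(a * s i)))
    (csm_min (fun i => Real.exp (2 * a * s i)) fun i => (Real.exp_pos _).le)
  convert h using 5 with i j
  rw [← Real.exp_monotone.map_min, ← Real.exp_add, ← Real.exp_add]
  congr 1
  rcases le_total (s i) (s j) with h | h
  · rw [min_eq_left (by gcongr), abs_of_nonpos (by linarith)]
    ring
  · rw [min_eq_right (by gcongr), abs_of_nonneg (by linarith)]
    ring

lemma csm_exp_sum {n : ℕ} {ι : Type*} (S : Finset ι) (a : ι → ℝ) (ha : ∀ k, 0 ≤ a k)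
    (s : ι → Fin n → ℝ) :
    (Matrix.of fun i j =>
      ((Real.exp (-(∑ k ∈ S, a k * |s k i - s k j|)) : ℝ) : ℂ)).PosSemidef := by
  classical
  induction S using Finset.induction_on with
  | empty => simpa using csm_rank_one (n := n) (fun _ => 1)
  | insert k S hk ih =>
    have h := csm_mul (csm_exp (a k) (ha k) (s k)) ih
    convert h using 5 with i j
    rw [Finset.sum_insert hk, ← Real.exp_add]
    congr 1
    ring

lemma csm_cos {n : ℕ} (s : Fin n → ℝ) :
    (Matrix.of fun i j => ((Real.cos (s i - s j) : ℝ) : ℂ)).PosSemidef := by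
  convert (csm_rank_one fun i => Real.cos (s i)).add (csm_rank_one fun i => Real.sin (s i)) using 1
  ext i j
  simp [Complex.cos_sub]

/-- The Cauchy spectral mixture kernel, viewed as a complex-valued function of the
difference `τ`, is positive definite on `ℝ^d`: for all points `x_1, …, x_n` and all
complex coefficients `c_1, …, c_n`, the sum `∑_{i,j} c_i conj(c_j) k_c(x_i - x_j)`
is a nonnegative real number. -/
theorem csmKernel_posDef {d Q : ℕ} (w : Fin Q → ℝ) (hw : ∀ q, 0 ≤ w q)
    (η : Fin Q → EuclideanSpace ℝ (Fin d)) (γ : Fin Q → Fin d → ℝ)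
    (hγ : ∀ q i, 0 < γ q i)
    (n : ℕ) (x : Fin n → EuclideanSpace ℝ (Fin d)) (c : Fin n → ℂ) :
    0 ≤ ∑ i, ∑ j, c i * (starRingEnd ℂ) (c j) * (csmKernel w η γ (x i - x j) : ℂ) := by
  have hP : (Matrix.of fun i j => ((csmKernel w η γ (x i - x j) : ℝ) : ℂ)).PosSemidef := by
    have h := Matrix.posSemidef_sum (Finset.univ : Finset (Fin Q)) fun q _ =>
      csm_mul (csm_mul (csm_rank_one fun _ : Fin n => Real.sqrt (w q))
        (csm_exp_sum Finset.univ (fun k => 2 * Real.pi * γ q k)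
          (fun k => mul_nonneg (by positivity) (hγ q k).le) (fun k i => x i k)))
        (csm_cos fun i => 2 * Real.pi * ⟪x i, η q⟫)
    convert h using 1
    ext i j
    simp only [Matrix.sum_apply, Matrix.of_apply, csmKernel]
    rw [Complex.ofReal_sum]
    refine Finset.sum_congr rfl fun q _ => ?_
    rw [Real.mul_self_sqrt (hw q), inner_sub_left, mul_sub, Finset.mul_sum,
      ← Finset.sum_neg_distrib]
    congr 4
    refine Finset.sum_congr rfl fun k _ => ?_
    simp only [PiLp.sub_apply]
    ring
  have h := hP.transpose.dotProduct_mulVec_nonneg c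
  convert h using 1
  simp only [dotProduct, Matrix.mulVec, Matrix.transpose_apply, Matrix.of_apply, Finset.mul_sum,
    Pi.star_apply]
  rw [Finset.sum_comm]
  refine Finset.sum_congr rfl fun i _ => Finset.sum_congr rfl fun j _ => ?_
  simp only [starRingEnd_apply]
  ring
end

section
/- Let S_gc = S_g + S_c, where S_g is the symmetrized Gaussian mixture spectral density with weights w_q^g ≥ 0 and S_c is the symmetrized product-Cauchy mixture spectral density with weights w_q^c ≥ 0. Then S_gc is nonnegative on ℝ^d, and for every τ ∈ ℝ^d, ∫_{ℝ^d} S_gc(s) e^{2πi⟨s,τ⟩} ds = Σ_{q=1}^{Q_g} w_q^g exp(−2π² τᵀ Σ_q τ) cos(2π τᵀ μ_q) + Σ_{q=1}^{Q_c} w_q^c exp(−2π Σ_{i=1}^d γ_{q,i} |τ_i|) cos(2π τᵀ η_q); moreover the resulting function k_gc of τ is positive definite on ℝ^d. -/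
open MeasureTheory Matrix
open scoped RealInnerProductSpace ComplexOrder BigOperators

/-- The Gaussian density `N(s; μ, Σ)` on `ℝ^d`. -/
noncomputable def gaussianDensity {d : ℕ} (μ : EuclideanSpace ℝ (Fin d))
    (M : Matrix (Fin d) (Fin d) ℝ) (s : EuclideanSpace ℝ (Fin d)) : ℝ :=
  (2 * Real.pi) ^ (-(d : ℝ) / 2) * M.det ^ (-(1 : ℝ) / 2) *
    Real.exp (-(dotProduct (fun i => s i - μ i) (M⁻¹.mulVec fun i => s i - μ i)) / 2)

/-- The product Cauchy density `C(s; η, γ) = ∏_i γ_i / (π (γ_i² + (s_i - η_i)²))`. -/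
noncomputable def cauchyProdDensity {d : ℕ} (η : EuclideanSpace ℝ (Fin d))
    (γ : Fin d → ℝ) (s : EuclideanSpace ℝ (Fin d)) : ℝ :=
  ∏ i, γ i / (Real.pi * ((γ i) ^ 2 + (s i - η i) ^ 2))

/-- The symmetrized Gaussian mixture spectral density `S_g(s) = (φ_g(s) + φ_g(-s))/2`. -/
noncomputable def symmGaussianMixture {d Qg : ℕ} (wg : Fin Qg → ℝ)
    (μ : Fin Qg → EuclideanSpace ℝ (Fin d)) (M : Fin Qg → Matrix (Fin d) (Fin d) ℝ)
    (s : EuclideanSpace ℝ (Fin d)) : ℝ :=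
  ((∑ q, wg q * gaussianDensity (μ q) (M q) s) +
    (∑ q, wg q * gaussianDensity (μ q) (M q) (-s))) / 2

/-- The symmetrized product-Cauchy mixture spectral density `S_c(s) = (φ_c(s) + φ_c(-s))/2`. -/
noncomputable def symmCauchyMixture {d Qc : ℕ} (wc : Fin Qc → ℝ)
    (η : Fin Qc → EuclideanSpace ℝ (Fin d)) (γ : Fin Qc → Fin d → ℝ)
    (s : EuclideanSpace ℝ (Fin d)) : ℝ :=
  ((∑ q, wc q * cauchyProdDensity (η q) (γ q) s) +
    (∑ q, wc q * cauchyProdDensity (η q) (γ q) (-s))) / 2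

/-- The Gaussian-Cauchy spectral mixture kernel `k_gc`. -/
noncomputable def gcsmKernel {d Qg Qc : ℕ} (wg : Fin Qg → ℝ)
    (μ : Fin Qg → EuclideanSpace ℝ (Fin d)) (M : Fin Qg → Matrix (Fin d) (Fin d) ℝ)
    (wc : Fin Qc → ℝ) (η : Fin Qc → EuclideanSpace ℝ (Fin d)) (γ : Fin Qc → Fin d → ℝ)
    (τ : EuclideanSpace ℝ (Fin d)) : ℝ :=
  (∑ q, wg q * Real.exp (-2 * Real.pi ^ 2 *
      dotProduct (fun i => τ i) ((M q).mulVec fun i => τ i)) *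
    Real.cos (2 * Real.pi * ⟪τ, μ q⟫)) +
  (∑ q, wc q * Real.exp (-2 * Real.pi * ∑ i, γ q i * |τ i|) *
    Real.cos (2 * Real.pi * ⟪τ, η q⟫))


open FourierTransform in
lemma aux_cauchy1 (γ : ℝ) (hγ : 0 < γ) (t : ℝ) :
    ∫ x : ℝ, ((γ / (Real.pi * (γ ^ 2 + x ^ 2)) : ℝ) : ℂ) *
      Complex.exp (2 * Real.pi * Complex.I * (x * t : ℝ)) =
      (Real.exp (-2 * Real.pi * (γ * |t|)) : ℂ) := by
  have hpi := Real.pi_pos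
  set f : ℝ → ℂ := fun t => (Real.exp (-2 * Real.pi * (γ * |t|)) : ℂ) with hf
  have hfc : Continuous f := by
    simp only [hf]; fun_prop
  have e1 : ∀ x : ℝ, Set.EqOn (fun v : ℝ => Complex.exp (↑(-2 * Real.pi * v * x) * Complex.I) • f v)
      (fun v : ℝ => Complex.exp ((2 * Real.pi * (γ - x * Complex.I)) * v)) (Set.Iic 0) := by
    intro x v hv
    simp only [hf, smul_eq_mul, Complex.ofReal_exp, ← Complex.exp_add,
      abs_of_nonpos (Set.mem_Iic.1 hv)]
    congr 1; push_cast; ring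
  have e2 : ∀ x : ℝ, Set.EqOn (fun v : ℝ => Complex.exp (↑(-2 * Real.pi * v * x) * Complex.I) • f v)
      (fun v : ℝ => Complex.exp ((-(2 * Real.pi * (γ + x * Complex.I))) * v)) (Set.Ioi 0) := by
    intro x v hv
    simp only [hf, smul_eq_mul, Complex.ofReal_exp, ← Complex.exp_add,
      abs_of_pos (Set.mem_Ioi.1 hv)]
    congr 1; push_cast; ring
  have r1 : ∀ x : ℝ, 0 < (2 * Real.pi * (γ - x * Complex.I) : ℂ).re := by
    intro x; simp; positivity
  have r2 : ∀ x : ℝ, (-(2 * Real.pi * (γ + x * Complex.I)) : ℂ).re < 0 := by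
    intro x; simp; positivity
  have i1 : ∀ x : ℝ, IntegrableOn (fun v : ℝ =>
      Complex.exp (↑(-2 * Real.pi * v * x) * Complex.I) • f v) (Set.Iic 0) := fun x =>
    (integrableOn_congr_fun (e1 x) measurableSet_Iic).2 (integrableOn_exp_mul_complex_Iic (r1 x) 0)
  have i2 : ∀ x : ℝ, IntegrableOn (fun v : ℝ =>
      Complex.exp (↑(-2 * Real.pi * v * x) * Complex.I) • f v) (Set.Ioi 0) := fun x =>
    (integrableOn_congr_fun (e2 x) measurableSet_Ioi).2 (integrableOn_exp_mul_complex_Ioi (r2 x) 0)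
  have hfi : Integrable f := by
    have := (i1 0).union (i2 0)
    rw [Set.Iic_union_Ioi, integrableOn_univ] at this
    simpa using this
  have hF : 𝓕 f = fun x : ℝ => ((γ / (Real.pi * (γ ^ 2 + x ^ 2)) : ℝ) : ℂ) := by
    ext x
    rw [Real.fourier_real_eq_integral_exp_smul, ← intervalIntegral.integral_Iic_add_Ioi (i1 x) (i2 x),
      setIntegral_congr_fun measurableSet_Iic (e1 x), setIntegral_congr_fun measurableSet_Ioi (e2 x),
      integral_exp_mul_complex_Iic (r1 x), integral_exp_mul_complex_Ioi (r2 x)]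
    have n1 : (γ - x * Complex.I : ℂ) ≠ 0 := by
      intro h; have := r1 x; rw [h] at this; simp at this
    have n2 : (γ + x * Complex.I : ℂ) ≠ 0 := by
      intro h; have := r2 x; rw [h] at this; simp at this
    have n3 : ((γ:ℂ)^2 + x^2) = (γ - x * Complex.I) * (γ + x * Complex.I) := by
      linear_combination ((x:ℂ)^2) * Complex.I_sq
    have n4 : (Real.pi : ℂ) ≠ 0 := by exact_mod_cast hpi.ne'
    push_cast
    rw [n3]
    simp only [mul_zero, Complex.exp_zero]
    field_simp
    ring
  have hFi : Integrable (𝓕 f) := by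
    rw [hF]
    apply Integrable.ofReal
    have := (integrable_inv_one_add_sq.comp_div hγ.ne').const_mul (1 / (Real.pi * γ))
    refine this.congr (Filter.Eventually.of_forall fun x => ?_)
    have : 0 < γ ^ 2 + x ^ 2 := by positivity
    change 1 / (Real.pi * γ) * (1 + (x / γ) ^ 2)⁻¹ = γ / (Real.pi * (γ ^ 2 + x ^ 2))
    field_simp
  have := congrFun (hfc.fourierInv_fourier_eq hfi hFi) t
  rw [Real.fourierInv_eq', hF] at this
  change _ = f t
  rw [← this]
  congr 1; ext x
  rw [smul_eq_mul, mul_comm]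
  congr 2
  simp
  ring

lemma aux_cauchy1' (η γ : ℝ) (hγ : 0 < γ) (t : ℝ) :
    ∫ x : ℝ, ((γ / (Real.pi * (γ ^ 2 + (x - η) ^ 2)) : ℝ) : ℂ) *
      Complex.exp (2 * Real.pi * Complex.I * (x * t : ℝ)) =
      (Real.exp (-2 * Real.pi * (γ * |t|)) : ℂ) *
        Complex.exp (2 * Real.pi * Complex.I * (t * η : ℝ)) := by
  rw [← integral_add_right_eq_self _ η, ← aux_cauchy1 γ hγ t, ← integral_mul_const]
  congr 1; ext x
  rw [mul_assoc (Complex.ofReal _), ← Complex.exp_add, add_sub_cancel_right]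
  congr 2; push_cast; ring

lemma aux_inner {d : ℕ} (s τ : EuclideanSpace ℝ (Fin d)) : ⟪s, τ⟫ = ∑ i, s i * τ i := by
  simp [PiLp.inner_apply, mul_comm]

lemma aux_cauchy {d : ℕ} (η : EuclideanSpace ℝ (Fin d)) (γ : Fin d → ℝ) (hγ : ∀ i, 0 < γ i)
    (τ : EuclideanSpace ℝ (Fin d)) :
    ∫ s, (cauchyProdDensity η γ s : ℂ) *
            Complex.exp (2 * Real.pi * Complex.I * (⟪s, τ⟫ : ℂ)) =
      (Real.exp (-2 * Real.pi * ∑ i, γ i * |τ i|) : ℂ) *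
        Complex.exp (2 * Real.pi * Complex.I * (⟪τ, η⟫ : ℂ)) := by
  rw [← (PiLp.volume_preserving_toLp (Fin d)).integral_comp
    (MeasurableEquiv.toLp 2 _).measurableEmbedding]
  simp only [aux_inner, cauchyProdDensity, Complex.ofReal_prod, Complex.ofReal_sum,
    Finset.mul_sum, Complex.exp_sum, Real.exp_sum, ← Finset.prod_mul_distrib]
  rw [integral_fintype_prod_volume_eq_prod (fun i (x : ℝ) =>
    ((γ i / (Real.pi * (γ i ^ 2 + (x - η i) ^ 2)) : ℝ) : ℂ) *
      Complex.exp (2 * Real.pi * Complex.I * (x * τ i : ℝ)))]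
  exact Finset.prod_congr rfl fun i _ => aux_cauchy1' (η i) (γ i) (hγ i) (τ i)

open scoped MatrixOrder in
lemma aux_factor {d : ℕ} (M : Matrix (Fin d) (Fin d) ℝ) (h : M.PosDef) :
    ∃ L : Matrix (Fin d) (Fin d) ℝ, M = L * Lᵀ := by
  obtain ⟨y, hy⟩ := CStarAlgebra.nonneg_iff_eq_star_mul_self.mp h.posSemidef.nonneg
  exact ⟨star y, by rw [hy]; simp [Matrix.star_eq_conjTranspose]⟩

lemma aux_gauss {d : ℕ} (μ : EuclideanSpace ℝ (Fin d)) (M : Matrix (Fin d) (Fin d) ℝ)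
    (h : M.PosDef) (τ : EuclideanSpace ℝ (Fin d)) :
    ∫ s, (gaussianDensity μ M s : ℂ) *
            Complex.exp (2 * Real.pi * Complex.I * (⟪s, τ⟫ : ℂ)) =
      (Real.exp (-2 * Real.pi ^ 2 *
      dotProduct (fun i => τ i) (M.mulVec fun i => τ i)) : ℂ) *
        Complex.exp (2 * Real.pi * Complex.I * (⟪τ, μ⟫ : ℂ)) := by
  obtain ⟨L, hL⟩ := aux_factor M h
  have hdet : M.det = L.det ^ 2 := by rw [hL, det_mul, det_transpose, sq]
  have hL0 : L.det ≠ 0 := by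
    intro h0; have := h.det_pos; rw [hdet, h0] at this; simp at this
  have hLu : IsUnit L.det := hL0.isUnit
  have hpi := Real.pi_pos
  set m : Fin d → ℝ := fun i => μ i with hm
  set t : Fin d → ℝ := fun i => τ i with ht
  rw [← (PiLp.volume_preserving_toLp (Fin d)).integral_comp
    (MeasurableEquiv.toLp 2 _).measurableEmbedding, ← integral_add_right_eq_self _ m]
  set F : (Fin d → ℝ) → ℂ := fun v => (gaussianDensity μ M (WithLp.toLp 2 (v + m)) : ℂ) *
            Complex.exp (2 * Real.pi * Complex.I * (⟪(WithLp.toLp 2 (v + m) : EuclideanSpace ℝ (Fin d)), τ⟫ : ℂ)) with hF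
  have hcov : ∫ v, F v = ((|L.det| : ℝ) : ℂ) * ∫ u, F (L *ᵥ u) := by
    have hFc : Continuous F := by
      simp only [hF, gaussianDensity, aux_inner, dotProduct, mulVec]
      fun_prop
    have h1 : ∫ u, F (L *ᵥ u) = ∫ v, F v ∂(Measure.map (toLin' L) volume) := by
      rw [integral_map]
      · rfl
      · exact (LinearMap.continuous_of_finiteDimensional _).aemeasurable
      · exact hFc.aestronglyMeasurable
    rw [h1, Real.map_matrix_volume_pi_eq_smul_volume_pi hL0, integral_smul_measure,
      ENNReal.toReal_ofReal (abs_nonneg _), abs_inv, Complex.real_smul, ← mul_assoc]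
    have : ((|L.det| : ℝ) : ℂ) ≠ 0 := by exact_mod_cast abs_ne_zero.2 hL0
    push_cast
    rw [mul_inv_cancel₀ this, one_mul]
  rw [hcov]
  have hq : ∀ u : Fin d → ℝ, (L *ᵥ u) ⬝ᵥ (M⁻¹ *ᵥ (L *ᵥ u)) = ∑ i, u i ^ 2 := by
    intro u
    have : M⁻¹ *ᵥ (L *ᵥ u) = (Lᵀ)⁻¹ *ᵥ u := by
      rw [hL, Matrix.mul_inv_rev, mulVec_mulVec, Matrix.mul_assoc, Matrix.nonsing_inv_mul _ hLu,
        Matrix.mul_one]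
    rw [this, dotProduct_mulVec, ← mulVec_transpose, transpose_nonsing_inv, transpose_transpose,
      mulVec_mulVec, Matrix.nonsing_inv_mul _ hLu, one_mulVec, dotProduct]
    simp only [sq]
  have hFL : ∀ u, F (L *ᵥ u) = (((2 * Real.pi) ^ (-(d : ℝ) / 2) * M.det ^ (-(1 : ℝ) / 2) : ℝ) : ℂ) *
      Complex.exp (2 * Real.pi * Complex.I * (⟪τ, μ⟫ : ℂ)) *
      Complex.exp (-(1/2 : ℂ) * ∑ i, (u i : ℂ) ^ 2 + ∑ i, (2 * Real.pi * Complex.I * ((Lᵀ *ᵥ t) i : ℝ)) * u i) := by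
    intro u
    have hin : ⟪(WithLp.toLp 2 (L *ᵥ u + m) : EuclideanSpace ℝ (Fin d)), τ⟫ = 
        ∑ i, (Lᵀ *ᵥ t) i * u i + ⟪τ, μ⟫ := by
      have h2 : ∑ i, (Lᵀ *ᵥ t) i * u i = (L *ᵥ u) ⬝ᵥ t := by
        rw [dotProduct_comm, dotProduct_mulVec, ← mulVec_transpose]; rfl
      rw [h2, aux_inner, aux_inner, dotProduct, ← Finset.sum_add_distrib]
      refine Finset.sum_congr rfl fun i _ => ?_
      simp [ht, hm]; ring
    have hd : gaussianDensity μ M (WithLp.toLp 2 (L *ᵥ u + m)) =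
      ((2 * Real.pi) ^ (-(d : ℝ) / 2) * M.det ^ (-(1 : ℝ) / 2)) * Real.exp (-(1/2) * ∑ i, u i ^ 2) := by
      have : (fun i => (WithLp.toLp 2 (L *ᵥ u + m) : EuclideanSpace ℝ (Fin d)) i - μ i) = L *ᵥ u := by
        ext i; simp [hm]
      rw [gaussianDensity, this, hq]
      congr 2; ring
    simp only [hF, hd, hin]
    rw [Complex.ofReal_mul, Complex.ofReal_exp, mul_assoc (Complex.ofReal _), mul_assoc (Complex.ofReal _), ← Complex.exp_add, ← Complex.exp_add]
    congr 2
    push_cast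
    simp only [mul_assoc, ← Finset.mul_sum]
    ring
  simp only [hFL]
  rw [integral_const_mul, GaussianFourier.integral_cexp_neg_mul_sum_add (by norm_num)]
  have hc : |L.det| * ((2 * Real.pi) ^ (-(d : ℝ) / 2) * M.det ^ (-(1 : ℝ) / 2)) = (2 * Real.pi) ^ (-(d : ℝ) / 2) := by
    have : M.det ^ (-(1 : ℝ) / 2) = |L.det|⁻¹ := by
      rw [hdet, ← sq_abs, ← Real.rpow_natCast, ← Real.rpow_mul (abs_nonneg _)]
      norm_num
      rw [Real.rpow_neg_one]
    rw [this]
    have := abs_ne_zero.2 hL0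
    field_simp
  have hc2 : ((Real.pi : ℂ) / (1/2)) ^ ((Fintype.card (Fin d) : ℂ) / 2) = (((2 * Real.pi) ^ ((d : ℝ) / 2) : ℝ) : ℂ) := by
    rw [Complex.ofReal_cpow (by positivity)]
    push_cast
    rw [Fintype.card_fin]
    congr 1
    ring
  have hc3 : (((2 * Real.pi) ^ (-(d : ℝ) / 2) : ℝ) : ℂ) * (((2 * Real.pi) ^ ((d : ℝ) / 2) : ℝ) : ℂ) = 1 := by
    rw [← Complex.ofReal_mul, ← Real.rpow_add (by positivity)]
    simp [neg_div]
  have hts : t ⬝ᵥ M *ᵥ t = ∑ i, (Lᵀ *ᵥ t) i ^ 2 := by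
    rw [hL, ← mulVec_mulVec, dotProduct_mulVec, ← mulVec_transpose, dotProduct]
    simp only [sq]
  have he : (∑ i, (2 * Real.pi * Complex.I * ((Lᵀ *ᵥ t) i : ℝ)) ^ 2) / (4 * (1/2 : ℂ)) = 
      ((-2 * Real.pi ^ 2 * (t ⬝ᵥ M *ᵥ t) : ℝ) : ℂ) := by
    rw [hts]
    push_cast
    simp only [mul_pow, Complex.I_sq, ← Finset.mul_sum]
    ring
  rw [hc2, he, ← Complex.ofReal_exp]
  rw [← hc] at hc3
  push_cast at hc3 ⊢
  linear_combination (Complex.exp (-2 * Real.pi ^ 2 * ((t ⬝ᵥ M *ᵥ t : ℝ) : ℂ)) * Complex.exp (2 * Real.pi * Complex.I * (⟪τ, μ⟫ : ℂ))) * hc3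

/-- `p` is integrable with inverse Fourier transform `k`. -/
def AuxFT {d : ℕ} (p k : EuclideanSpace ℝ (Fin d) → ℝ) : Prop :=
  Integrable p ∧ ∀ τ, ∫ s, (p s : ℂ) * Complex.exp (2 * Real.pi * Complex.I * (⟪s, τ⟫ : ℂ)) = (k τ : ℂ)

lemma aux_int {d : ℕ} {p : EuclideanSpace ℝ (Fin d) → ℝ} (h : Integrable p)
    (τ : EuclideanSpace ℝ (Fin d)) :
    Integrable (fun s => (p s : ℂ) * Complex.exp (2 * Real.pi * Complex.I * (⟪s, τ⟫ : ℂ))) := by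
  refine Integrable.mul_bdd (c := 1) h.ofReal ?_ ?_
  · exact Continuous.aestronglyMeasurable (by fun_prop)
  · refine Filter.Eventually.of_forall fun s => ?_
    simp [Complex.norm_exp]

lemma AuxFT.add {d : ℕ} {p k p' k' : EuclideanSpace ℝ (Fin d) → ℝ} (h : AuxFT p k)
    (h' : AuxFT p' k') : AuxFT (fun s => p s + p' s) (fun s => k s + k' s) := by
  refine ⟨h.1.add h'.1, fun τ => ?_⟩
  simp only [Complex.ofReal_add, add_mul]
  rw [integral_add (aux_int h.1 τ) (aux_int h'.1 τ), h.2, h'.2]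

lemma AuxFT.const_mul {d : ℕ} {p k : EuclideanSpace ℝ (Fin d) → ℝ} (h : AuxFT p k) (c : ℝ) :
    AuxFT (fun s => c * p s) (fun s => c * k s) := by
  refine ⟨h.1.const_mul c, fun τ => ?_⟩
  simp only [Complex.ofReal_mul, mul_assoc (Complex.ofReal c)]
  rw [integral_const_mul, h.2]

lemma AuxFT.sum {d n : ℕ} {p k : Fin n → EuclideanSpace ℝ (Fin d) → ℝ} (h : ∀ q, AuxFT (p q) (k q)) :
    AuxFT (fun s => ∑ q, p q s) (fun s => ∑ q, k q s) := by
  refine ⟨integrable_finsetSum _ fun q _ => (h q).1, fun τ => ?_⟩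
  simp only [Complex.ofReal_sum, Finset.sum_mul]
  rw [integral_finsetSum _ fun q _ => aux_int (h q).1 τ]
  exact Finset.sum_congr rfl fun q _ => (h q).2 τ

lemma AuxFT.symm {d : ℕ} {p K : EuclideanSpace ℝ (Fin d) → ℝ} (m : EuclideanSpace ℝ (Fin d))
    (h : ∀ τ, ∫ s, (p s : ℂ) * Complex.exp (2 * Real.pi * Complex.I * (⟪s, τ⟫ : ℂ)) =
      (K τ : ℂ) * Complex.exp (2 * Real.pi * Complex.I * (⟪τ, m⟫ : ℂ)))
    (h0 : K 0 = 1) (hK : ∀ τ, K (-τ) = K τ) :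
    AuxFT (fun s => (p s + p (-s)) / 2) (fun τ => K τ * Real.cos (2 * Real.pi * ⟪τ, m⟫)) := by
  have hi : Integrable p := by
    have h1 := h 0
    simp only [inner_zero_right, inner_zero_left, h0, Complex.ofReal_zero, mul_zero,
      Complex.exp_zero, mul_one, Complex.ofReal_one] at h1
    have h2 : Integrable (fun s => (p s : ℂ)) := .of_integral_ne_zero (by rw [h1]; exact one_ne_zero)
    simpa using h2.re
  refine ⟨(hi.add hi.comp_neg).div_const 2, fun τ => ?_⟩
  have hneg : ∫ s, (p (-s) : ℂ) * Complex.exp (2 * Real.pi * Complex.I * (⟪s, τ⟫ : ℂ)) =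
      (K τ : ℂ) * Complex.exp (-(2 * Real.pi * Complex.I * (⟪τ, m⟫ : ℂ))) := by
    rw [← integral_neg_eq_self]
    have := h (-τ)
    rw [hK] at this
    simpa [inner_neg_left, inner_neg_right] using this
  have e : ∀ s, (((p s + p (-s)) / 2 : ℝ) : ℂ) * Complex.exp (2 * Real.pi * Complex.I * (⟪s, τ⟫ : ℂ)) =
     (1/2 : ℂ) * ((p s : ℂ) * Complex.exp (2 * Real.pi * Complex.I * (⟪s, τ⟫ : ℂ)) +
      (p (-s) : ℂ) * Complex.exp (2 * Real.pi * Complex.I * (⟪s, τ⟫ : ℂ))) := by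
    intro s; push_cast; ring
  simp only [e]
  rw [integral_const_mul, integral_add (aux_int hi τ) (aux_int hi.comp_neg τ), hneg, h]
  push_cast
  rw [Complex.cos]
  rw [show (2 * Real.pi * (⟪τ, m⟫ : ℂ)) * Complex.I = 2 * Real.pi * Complex.I * (⟪τ, m⟫ : ℂ) by ring,
    show -(2 * Real.pi * (⟪τ, m⟫ : ℂ)) * Complex.I = -(2 * Real.pi * Complex.I * (⟪τ, m⟫ : ℂ)) by ring]
  ring

lemma AuxFT.posDef {d : ℕ} {p k : EuclideanSpace ℝ (Fin d) → ℝ} (h : AuxFT p k)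
    (hp : ∀ s, 0 ≤ p s) (n : ℕ) (x : Fin n → EuclideanSpace ℝ (Fin d)) (c : Fin n → ℂ) :
    0 ≤ ∑ i, ∑ j, c i * (starRingEnd ℂ) (c j) * ((k (x i - x j) : ℝ) : ℂ) := by
  have key : ∑ i, ∑ j, c i * (starRingEnd ℂ) (c j) * ((k (x i - x j) : ℝ) : ℂ) =
      ∫ s, ((p s * Complex.normSq (∑ i, c i *
        Complex.exp (2 * Real.pi * Complex.I * (⟪s, x i⟫ : ℂ))) : ℝ) : ℂ) := by
    simp only [← h.2, ← integral_const_mul]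
    have hI : ∀ i j, Integrable (fun s => c i * (starRingEnd ℂ) (c j) * ((p s : ℂ) *
        Complex.exp (2 * Real.pi * Complex.I * (⟪s, x i - x j⟫ : ℂ)))) :=
      fun i j => (aux_int h.1 _).const_mul _
    simp only [← integral_finsetSum _ fun j _ => hI _ j]
    rw [← integral_finsetSum _ fun i _ => integrable_finsetSum _ fun j _ => hI i j]
    congr 1; ext s
    rw [Complex.ofReal_mul, ← Complex.mul_conj, map_sum, Finset.sum_mul_sum, Finset.mul_sum]
    refine Finset.sum_congr rfl fun i _ => ?_
    rw [Finset.mul_sum]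
    refine Finset.sum_congr rfl fun j _ => ?_
    have : Complex.exp (2 * Real.pi * Complex.I * (⟪s, x i - x j⟫ : ℂ)) =
      Complex.exp (2 * Real.pi * Complex.I * (⟪s, x i⟫ : ℂ)) *
      (starRingEnd ℂ) (Complex.exp (2 * Real.pi * Complex.I * (⟪s, x j⟫ : ℂ))) := by
      rw [← Complex.exp_conj, ← Complex.exp_add]
      congr 1
      have h2 : (starRingEnd ℂ) 2 = 2 := map_ofNat _ 2
      simp [inner_sub_right, h2]
      ring
    rw [this, map_mul]
    ring
  rw [key, integral_complex_ofReal]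
  exact Complex.zero_le_real.2 (integral_nonneg fun s => mul_nonneg (hp s) (Complex.normSq_nonneg _))

/-- Let `S_gc = S_g + S_c` be the sum of the symmetrized Gaussian and product-Cauchy
mixture spectral densities. Then `S_gc` is nonnegative on `ℝ^d`, its inverse Fourier
transform equals the Gaussian-Cauchy spectral mixture kernel `k_gc`, and `k_gc`
(viewed as a complex-valued function of the difference) is positive definite. -/
theorem gcsm_nonneg_fourier_posDef {d Qg Qc : ℕ}
    (wg : Fin Qg → ℝ) (hwg : ∀ q, 0 ≤ wg q)
    (μ : Fin Qg → EuclideanSpace ℝ (Fin d)) (M : Fin Qg → Matrix (Fin d) (Fin d) ℝ)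
    (hsymm : ∀ q, (M q).IsSymm) (hpd : ∀ q, (M q).PosDef)
    (wc : Fin Qc → ℝ) (hwc : ∀ q, 0 ≤ wc q)
    (η : Fin Qc → EuclideanSpace ℝ (Fin d)) (γ : Fin Qc → Fin d → ℝ)
    (hγ : ∀ q i, 0 < γ q i) :
    (∀ s : EuclideanSpace ℝ (Fin d),
        0 ≤ symmGaussianMixture wg μ M s + symmCauchyMixture wc η γ s) ∧
    (∀ τ : EuclideanSpace ℝ (Fin d),
        ∫ s, ((symmGaussianMixture wg μ M s + symmCauchyMixture wc η γ s : ℝ) : ℂ) *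
            Complex.exp (2 * Real.pi * Complex.I * (⟪s, τ⟫ : ℂ)) =
          ((gcsmKernel wg μ M wc η γ τ : ℝ) : ℂ)) ∧
    (∀ (n : ℕ) (x : Fin n → EuclideanSpace ℝ (Fin d)) (c : Fin n → ℂ),
        0 ≤ ∑ i, ∑ j, c i * (starRingEnd ℂ) (c j) *
          ((gcsmKernel wg μ M wc η γ (x i - x j) : ℝ) : ℂ)) := by
  have hnn : ∀ s : EuclideanSpace ℝ (Fin d),
        0 ≤ symmGaussianMixture wg μ M s + symmCauchyMixture wc η γ s := by
    intro s
    have hg : ∀ q s, 0 ≤ gaussianDensity (μ q) (M q) s := by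
      intro q s
      have := (hpd q).det_pos
      have := Real.pi_pos
      unfold gaussianDensity
      positivity
    have hc : ∀ q s, 0 ≤ cauchyProdDensity (η q) (γ q) s := by
      intro q s
      refine Finset.prod_nonneg fun i _ => ?_
      have := hγ q i
      have := Real.pi_pos
      positivity
    have a1 := fun s => Finset.sum_nonneg fun q (_ : q ∈ Finset.univ) => mul_nonneg (hwg q) (hg q s)
    have a2 := fun s => Finset.sum_nonneg fun q (_ : q ∈ Finset.univ) => mul_nonneg (hwc q) (hc q s)
    have b1 := a1 s
    have b2 := a1 (-s)
    have b3 := a2 s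
    have b4 := a2 (-s)
    unfold symmGaussianMixture symmCauchyMixture
    linarith
  have hFT : AuxFT (fun s => symmGaussianMixture wg μ M s + symmCauchyMixture wc η γ s)
      (gcsmKernel wg μ M wc η γ) := by
    have hG := AuxFT.sum fun q => (AuxFT.symm (μ q) (aux_gauss (μ q) (M q) (hpd q))
        (K := fun τ => Real.exp (-2 * Real.pi ^ 2 *
          dotProduct (fun i => τ i) ((M q).mulVec fun i => τ i))) (by simp [dotProduct])
        (by intro τ; simp [dotProduct, mulVec])).const_mul (wg q)
    have hC := AuxFT.sum fun q => (AuxFT.symm (η q) (aux_cauchy (η q) (γ q) (hγ q))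
        (K := fun τ => Real.exp (-2 * Real.pi * ∑ i, γ q i * |τ i|)) (by simp)
        (by intro τ; simp)).const_mul (wc q)
    have e1 : gcsmKernel wg μ M wc η γ = fun τ => gcsmKernel wg μ M wc η γ τ := rfl
    rw [e1]
    simp only [symmGaussianMixture, symmCauchyMixture, ← Finset.sum_add_distrib, Finset.sum_div,
        ← mul_add, mul_div_assoc, gcsmKernel, mul_assoc (wg _), mul_assoc (wc _)]
    simp only [← Finset.sum_add_distrib, Finset.sum_div, ← mul_add, mul_div_assoc] at hG hC
    exact hG.add hC
  exact ⟨hnn, hFT.2, fun n x c => hFT.posDef hnn n x c⟩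
end

section
/- The weighted exponentiated Hamming kernel k_u is a positive semidefinite kernel on X = D_1 × ⋯ × D_U: for every n ∈ ℕ, all points x_1,…,x_n ∈ X and all real coefficients c_1,…,c_n, Σ_{i,j=1}^n c_i c_j k_u(x_i, x_j) ≥ 0. -/
open scoped BigOperators

/-- The weighted exponentiated Hamming kernel on `X = D_1 × ⋯ × D_U`:
`k_u(x, y) = exp((1/U) ∑_i ℓ_i δ(x⁽ⁱ⁾, y⁽ⁱ⁾))`. -/
noncomputable def hammingKernel {U : ℕ} {D : Fin U → Type*} [∀ i, DecidableEq (D i)]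
    (ℓ : Fin U → ℝ) (x y : ∀ i, D i) : ℝ :=
  Real.exp ((1 / (U : ℝ)) * ∑ i, ℓ i * (if x i = y i then (1 : ℝ) else 0))

theorem hammingKernel_psd_aux {U : ℕ} (D : Fin U → Type*)
    [∀ i, Fintype (D i)] [∀ i, DecidableEq (D i)]
    (a : Fin U → ℝ) (ha : ∀ i, 0 ≤ a i)
    (n : ℕ) (x : Fin n → ∀ i, D i) (s : Finset (Fin U)) : ∀ (c : Fin n → ℝ),
    0 ≤ ∑ i, ∑ j, c i * c j * ∏ k ∈ s, (1 + a k * (if x i k = x j k then (1 : ℝ) else 0)) := by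
  induction s using Finset.induction_on with
  | empty =>
    intro c
    simp only [Finset.prod_empty, mul_one, ← Finset.mul_sum, ← Finset.sum_mul]
    exact mul_self_nonneg _
  | insert k s hk ih =>
    intro c
    have key : ∀ i j, (if x i k = x j k then (1 : ℝ) else 0)
        = ∑ d : D k, (if x i k = d then (1 : ℝ) else 0) * (if x j k = d then (1 : ℝ) else 0) := by
      intro i j
      simp [eq_comm]
    have h : ∑ i, ∑ j, c i * c j *
          ∏ k ∈ insert k s, (1 + a k * (if x i k = x j k then (1 : ℝ) else 0))
        = (∑ i, ∑ j, c i * c j * ∏ k ∈ s, (1 + a k * (if x i k = x j k then (1 : ℝ) else 0)))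
          + a k * ∑ d : D k, ∑ i, ∑ j, (c i * (if x i k = d then (1 : ℝ) else 0)) *
            (c j * (if x j k = d then (1 : ℝ) else 0)) *
            ∏ k ∈ s, (1 + a k * (if x i k = x j k then (1 : ℝ) else 0)) := by
      rw [Finset.sum_comm (s := (Finset.univ : Finset (D k))), Finset.mul_sum,
        ← Finset.sum_add_distrib]
      refine Finset.sum_congr rfl fun i _ => ?_
      rw [Finset.sum_comm (s := (Finset.univ : Finset (D k))), Finset.mul_sum,
        ← Finset.sum_add_distrib]
      refine Finset.sum_congr rfl fun j _ => ?_
      rw [Finset.prod_insert hk, key i j]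
      generalize ∏ k ∈ s, (1 + a k * (if x i k = x j k then (1 : ℝ) else 0)) = P
      have : ∑ d : D k, c i * (if x i k = d then (1 : ℝ) else 0) *
            (c j * (if x j k = d then (1 : ℝ) else 0)) * P
          = c i * c j * P * ∑ d : D k,
            (if x i k = d then (1 : ℝ) else 0) * (if x j k = d then (1 : ℝ) else 0) := by
        rw [Finset.mul_sum]
        exact Finset.sum_congr rfl fun d _ => by ring
      rw [this]
      ring
    rw [h]
    exact add_nonneg (ih c) (mul_nonneg (ha k) (Finset.sum_nonneg fun d _ => ih _))

/-- The weighted exponentiated Hamming kernel is a positive semidefinite kernel on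
`X = D_1 × ⋯ × D_U`: for all points `x_1, …, x_n ∈ X` and real coefficients
`c_1, …, c_n`, one has `∑_{i,j} c_i c_j k_u(x_i, x_j) ≥ 0`. -/
theorem hammingKernel_psd {U : ℕ} (hU : 0 < U) (D : Fin U → Type*)
    [∀ i, Fintype (D i)] [∀ i, Nonempty (D i)] [∀ i, DecidableEq (D i)]
    (ℓ : Fin U → ℝ) (hℓ : ∀ i, 0 ≤ ℓ i)
    (n : ℕ) (x : Fin n → ∀ i, D i) (c : Fin n → ℝ) :
    0 ≤ ∑ i, ∑ j, c i * c j * hammingKernel ℓ (x i) (x j) := by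
  have h := hammingKernel_psd_aux D (fun k => Real.exp (1 / (U : ℝ) * ℓ k) - 1)
    (fun k => sub_nonneg.2 (Real.one_le_exp (mul_nonneg (by positivity) (hℓ k)))) n x
    Finset.univ c
  convert h using 5 with i _ j _
  unfold hammingKernel
  rw [Finset.mul_sum, Real.exp_sum]
  refine Finset.prod_congr rfl fun k _ => ?_
  split_ifs <;> simp
end

section
/- For every d ≥ 1, a > 0, b > 0 and c ∈ ℝ, the Ackley function satisfies f_Ackley(x) ≥ 0 for all x ∈ ℝ^d, and f_Ackley(x) = 0 if and only if x = 0. -/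
open scoped BigOperators

/-- The Ackley function
`f(x) = -a exp(-b √((1/d) ∑ x_i²)) - exp((1/d) ∑ cos(c x_i)) + a + e` on `ℝ^d`. -/
noncomputable def ackley {d : ℕ} (a b c : ℝ) (x : Fin d → ℝ) : ℝ :=
  -a * Real.exp (-b * Real.sqrt ((1 / (d : ℝ)) * ∑ i, x i ^ 2)) -
    Real.exp ((1 / (d : ℝ)) * ∑ i, Real.cos (c * x i)) + a + Real.exp 1

/-- For every `d ≥ 1`, `a > 0`, `b > 0` and `c ∈ ℝ`, the Ackley function is
nonnegative on `ℝ^d`, and vanishes exactly at `x = 0`. -/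
theorem ackley_nonneg_and_eq_zero_iff {d : ℕ} (hd : 1 ≤ d) (a b c : ℝ)
    (ha : 0 < a) (hb : 0 < b) (x : Fin d → ℝ) :
    0 ≤ ackley a b c x ∧ (ackley a b c x = 0 ↔ x = 0) := by
  have hd0 : (0 : ℝ) < d := by exact_mod_cast hd
  have hcos : Real.exp ((1 / (d : ℝ)) * ∑ i, Real.cos (c * x i)) ≤ Real.exp 1 := by
    apply Real.exp_le_exp.mpr
    have h : ∑ i, Real.cos (c * x i) ≤ (d : ℝ) := by
      calc ∑ i, Real.cos (c * x i) ≤ ∑ _i : Fin d, (1 : ℝ) :=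
            Finset.sum_le_sum fun i _ => Real.cos_le_one _
        _ = d := by simp
    rw [one_div, inv_mul_le_iff₀ hd0]
    simpa using h
  have hs := Real.sqrt_nonneg ((1 / (d : ℝ)) * ∑ i, x i ^ 2)
  have hexp : Real.exp (-b * Real.sqrt ((1 / (d : ℝ)) * ∑ i, x i ^ 2)) ≤ 1 := by
    apply Real.exp_le_one_iff.mpr
    nlinarith
  have hmul := mul_le_mul_of_nonneg_left hexp ha.le
  refine ⟨by unfold ackley; linarith, ?_, ?_⟩
  · intro h
    by_contra hx
    obtain ⟨j, hj⟩ := Function.ne_iff.mp hx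
    have hsum : 0 < ∑ i, x i ^ 2 :=
      Finset.sum_pos' (fun i _ => sq_nonneg _)
        ⟨j, Finset.mem_univ j, sq_pos_iff.mpr hj⟩
    have hs' : 0 < Real.sqrt ((1 / (d : ℝ)) * ∑ i, x i ^ 2) :=
      Real.sqrt_pos.mpr (by positivity)
    have hlt : Real.exp (-b * Real.sqrt ((1 / (d : ℝ)) * ∑ i, x i ^ 2)) < 1 := by
      apply Real.exp_lt_one_iff.mpr
      nlinarith [mul_pos hb hs']
    have := mul_lt_mul_of_pos_left hlt ha
    unfold ackley at h
    linarith
  · rintro rfl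
    have : (d : ℝ) ≠ 0 := hd0.ne'
    simp [ackley, this]
    ring
end

section
/- The Cauchy spectral mixture kernel k_c and its symmetrized product-Cauchy mixture spectral density S_c form a Fourier pair in both directions: for every s ∈ ℝ^d, ∫_{ℝ^d} k_c(τ) e^{−2πi⟨s,τ⟩} dτ = S_c(s), where S_c(s) = (φ_c(s) + φ_c(−s))/2 with φ_c(s) = Σ_{q=1}^Q w_q C(s; η_q, γ_q). -/
open MeasureTheory
open scoped RealInnerProductSpace BigOperators

theorem aux_int1 (a b : ℝ) (ha : 0 < a) :
    Integrable (fun x : ℝ => Complex.exp (-2 * Real.pi * (a * |x| : ℝ) - 2 * Real.pi * Complex.I * (b * x : ℝ))) ∧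
    ∫ x : ℝ, Complex.exp (-2 * Real.pi * (a * |x| : ℝ) - 2 * Real.pi * Complex.I * (b * x : ℝ)) =
      ((a / (Real.pi * (a ^ 2 + b ^ 2)) : ℝ) : ℂ) := by
  have hpi := Real.pi_pos
  set c : ℂ := -2 * Real.pi * a - 2 * Real.pi * Complex.I * b with hc
  set c' : ℂ := 2 * Real.pi * a - 2 * Real.pi * Complex.I * b with hc'
  have hcre : c.re < 0 := by
    have : 0 < Real.pi * a := by positivity
    simp [hc]; nlinarith
  have hcre' : 0 < c'.re := by
    have : 0 < Real.pi * a := by positivity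
    simp [hc']; nlinarith
  set f : ℝ → ℂ := fun x : ℝ => Complex.exp (-2 * Real.pi * (a * |x| : ℝ) - 2 * Real.pi * Complex.I * (b * x : ℝ)) with hf
  have e1 : Set.EqOn f (fun x : ℝ => Complex.exp (c * x)) (Set.Ioi 0) := by
    intro x hx
    simp only [hf, abs_of_pos (Set.mem_Ioi.1 hx), hc]
    congr 1; push_cast; ring
  have e2 : Set.EqOn f (fun x : ℝ => Complex.exp (c' * x)) (Set.Iic 0) := by
    intro x hx
    simp only [hf, abs_of_nonpos (Set.mem_Iic.1 hx), hc']
    congr 1; push_cast; ring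
  have i1 : IntegrableOn f (Set.Ioi 0) :=
    (integrableOn_congr_fun e1 measurableSet_Ioi).2 (integrableOn_exp_mul_complex_Ioi hcre 0)
  have i2 : IntegrableOn f (Set.Iic 0) :=
    (integrableOn_congr_fun e2 measurableSet_Iic).2 (integrableOn_exp_mul_complex_Iic hcre' 0)
  refine ⟨?_, ?_⟩
  · rw [← integrableOn_univ, ← Set.Iic_union_Ioi (a := (0:ℝ))]
    exact i2.union i1
  · rw [← intervalIntegral.integral_Iic_add_Ioi i2 i1, setIntegral_congr_fun measurableSet_Ioi e1,
      setIntegral_congr_fun measurableSet_Iic e2, integral_exp_mul_complex_Ioi hcre,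
      integral_exp_mul_complex_Iic hcre']
    have h1 : c ≠ 0 := fun h => by simp [h] at hcre
    have h2 : c' ≠ 0 := fun h => by simp [h] at hcre'
    have h3 : ((Real.pi : ℂ) * (a ^ 2 + b ^ 2)) ≠ 0 := by
      have : Real.pi * (a ^ 2 + b ^ 2) ≠ 0 := by positivity
      exact_mod_cast this
    simp only [Complex.ofReal_zero, mul_zero, Complex.exp_zero]
    push_cast
    rw [div_add_div _ _ h2 h1, div_eq_div_iff (mul_ne_zero h2 h1) h3, hc, hc']
    ring_nf
    simp only [Complex.I_sq]
    ring

theorem aux_intd {d : ℕ} (a b : Fin d → ℝ) (ha : ∀ i, 0 < a i) :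
    Integrable (fun τ : EuclideanSpace ℝ (Fin d) => Complex.exp (-2 * Real.pi * (∑ i, a i * |τ i| : ℝ)
      - 2 * Real.pi * Complex.I * (∑ i, b i * τ i : ℝ))) ∧
    ∫ τ : EuclideanSpace ℝ (Fin d), Complex.exp (-2 * Real.pi * (∑ i, a i * |τ i| : ℝ)
      - 2 * Real.pi * Complex.I * (∑ i, b i * τ i : ℝ)) =
      ((∏ i, a i / (Real.pi * (a i ^ 2 + b i ^ 2)) : ℝ) : ℂ) := by
  set F : (Fin d → ℝ) → ℂ := fun x => ∏ i, Complex.exp (-2 * Real.pi * (a i * |x i| : ℝ) - 2 * Real.pi * Complex.I * (b i * x i : ℝ)) with hF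
  have hE : (fun τ : EuclideanSpace ℝ (Fin d) => Complex.exp (-2 * Real.pi * (∑ i, a i * |τ i| : ℝ)
      - 2 * Real.pi * Complex.I * (∑ i, b i * τ i : ℝ))) = F ∘ (MeasurableEquiv.toLp 2 (Fin d → ℝ)).symm := by
    funext τ
    simp only [hF, Function.comp, ← Complex.exp_sum]
    congr 1
    push_cast
    rw [Finset.sum_sub_distrib, Finset.mul_sum, Finset.mul_sum]
    rfl
  have mp := EuclideanSpace.volume_preserving_symm_measurableEquiv_toLp (Fin d)
  constructor
  · rw [hE, mp.integrable_comp_emb (MeasurableEquiv.measurableEmbedding _)]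
    exact Integrable.fintype_prod (fun i => (aux_int1 (a i) (b i) (ha i)).1)
  · rw [hE]
    simp only [Function.comp_def]
    rw [mp.integral_comp (MeasurableEquiv.measurableEmbedding _), hF,
      integral_fintype_prod_volume_eq_prod (fun i (x : ℝ) => Complex.exp (-2 * Real.pi * (a i * |x| : ℝ) - 2 * Real.pi * Complex.I * (b i * x : ℝ)))]
    push_cast
    refine Finset.prod_congr rfl fun i _ => ?_
    have := (aux_int1 (a i) (b i) (ha i)).2
    push_cast at this
    exact this

/-- The forward Fourier transform of the Cauchy spectral mixture kernel `k_c`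
recovers the symmetrized product-Cauchy mixture spectral density
`S_c(s) = (φ_c(s) + φ_c(-s))/2` with `φ_c(s) = ∑_q w_q C(s; η_q, γ_q)`. -/
theorem csm_forward_fourier {d Q : ℕ} (w : Fin Q → ℝ) (hw : ∀ q, 0 ≤ w q)
    (η : Fin Q → EuclideanSpace ℝ (Fin d)) (γ : Fin Q → Fin d → ℝ)
    (hγ : ∀ q i, 0 < γ q i) (s : EuclideanSpace ℝ (Fin d)) :
    ∫ τ, ((csmKernel w η γ τ : ℝ) : ℂ) *
        Complex.exp (-(2 * Real.pi * Complex.I * (⟪s, τ⟫ : ℂ))) =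
      ((((∑ q, w q * cauchyProdDensity (η q) (γ q) s) +
          (∑ q, w q * cauchyProdDensity (η q) (γ q) (-s))) / 2 : ℝ) : ℂ) := by
  have key : ∀ τ : EuclideanSpace ℝ (Fin d), ((csmKernel w η γ τ : ℝ) : ℂ) *
        Complex.exp (-(2 * Real.pi * Complex.I * (⟪s, τ⟫ : ℂ))) =
      ∑ q, (w q / 2 : ℂ) * (Complex.exp (-2 * Real.pi * (∑ i, γ q i * |τ i| : ℝ)
          - 2 * Real.pi * Complex.I * (∑ i, (s i - η q i) * τ i : ℝ)) +
        Complex.exp (-2 * Real.pi * (∑ i, γ q i * |τ i| : ℝ)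
          - 2 * Real.pi * Complex.I * (∑ i, (-s i - η q i) * (-τ i) : ℝ))) := by
    intro τ
    simp only [csmKernel]
    rw [Complex.ofReal_sum, Finset.sum_mul]
    refine Finset.sum_congr rfl fun q _ => ?_
    have hs : (∑ i, (s i - η q i) * τ i : ℝ) = ⟪s, τ⟫ - ⟪τ, η q⟫ := by
      simp only [PiLp.inner_apply, ← Finset.sum_sub_distrib]
      refine Finset.sum_congr rfl fun i _ => ?_
      simp; ring
    have hs' : (∑ i, (-s i - η q i) * (-τ i) : ℝ) = ⟪s, τ⟫ + ⟪τ, η q⟫ := by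
      simp only [PiLp.inner_apply, ← Finset.sum_add_distrib]
      refine Finset.sum_congr rfl fun i _ => ?_
      simp; ring
    rw [hs, hs']
    generalize (∑ i, γ q i * |τ i| : ℝ) = A
    generalize (⟪s, τ⟫ : ℝ) = u
    generalize (⟪τ, η q⟫ : ℝ) = v
    push_cast
    rw [Complex.cos, show -2 * (Real.pi : ℂ) * A - 2 * Real.pi * Complex.I * (u - v) =
        -2 * Real.pi * A + (-(2 * Real.pi * Complex.I * u) + 2 * Real.pi * v * Complex.I) by ring,
      show -2 * (Real.pi : ℂ) * A - 2 * Real.pi * Complex.I * (u + v) =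
        -2 * Real.pi * A + (-(2 * Real.pi * Complex.I * u) + -(2 * Real.pi * v) * Complex.I) by ring]
    simp only [Complex.exp_add]
    ring
  have hm : ∀ q, Integrable (fun τ : EuclideanSpace ℝ (Fin d) =>
      Complex.exp (-2 * Real.pi * (∑ i, γ q i * |τ i| : ℝ)
          - 2 * Real.pi * Complex.I * (∑ i, (-s i - η q i) * (-τ i) : ℝ))) ∧
      ∫ τ : EuclideanSpace ℝ (Fin d), Complex.exp (-2 * Real.pi * (∑ i, γ q i * |τ i| : ℝ)
          - 2 * Real.pi * Complex.I * (∑ i, (-s i - η q i) * (-τ i) : ℝ)) =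
        ((cauchyProdDensity (η q) (γ q) (-s) : ℝ) : ℂ) := by
    intro q
    have h := aux_intd (γ q) (fun i => -(-s i - η q i)) (hγ q)
    simp only [neg_sq, fun (i : Fin d) (x : ℝ) => neg_mul_comm (-s i - η q i) x] at h
    exact h
  have hp := fun q => aux_intd (γ q) (fun i => s i - η q i) (hγ q)
  simp_rw [key]
  rw [integral_finsetSum]
  swap
  · exact fun q _ => ((hp q).1.add (hm q).1).const_mul _
  rw [← Finset.sum_add_distrib, Finset.sum_div, Complex.ofReal_sum]
  refine Finset.sum_congr rfl fun q _ => ?_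
  rw [integral_const_mul, integral_add (hp q).1 (hm q).1, (hp q).2, (hm q).2]
  change _ * (((cauchyProdDensity (η q) (γ q) s : ℝ) : ℂ) + _) = _
  push_cast
  ring
end
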